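/- Let n ≥ 1, let 𝒯 be a tree sequence of order n and let ρ ≥ 1. Then e_ρ(Δ_1,...,Δ_n) applied to the function k ↦ L_n(𝒯,k) is identically zero on ℤ^n, where Δ_i is the forward difference operator in the i-th coordinate and e_ρ is the ρ-th elementary symmetric polynomial in n variables. -/

import Mathlib

/-- The simple graph underlying a directed edge labeling. -/
def treeRel {n : ℕ} (e : Fin (n - 1) → Fin n × Fin n) : SimpleGraph (Fin n) :=
  SimpleGraph.fromRel (fun p q => ∃ j, e j = (p, q))

/-- An `n`-tree: a directed tree whose `n` vertices are identified with `1, …, n`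
(here `Fin n`) and whose `n - 1` edges are identified with `1', …, (n-1)'`
(here `Fin (n-1)`); `edge j = (p, q)` means the edge `j'` is directed from `p` to `q`. -/
structure NTree (n : ℕ) where
  edge : Fin (n - 1) → Fin n × Fin n
  loopless : ∀ j, (edge j).1 ≠ (edge j).2
  edgeInj : ∀ j j' : Fin (n - 1),
    (edge j = edge j' ∨ edge j = ((edge j').2, (edge j').1)) → j = j'
  conn : (treeRel edge).Connected

/-- The head of the edge `j'` with respect to the standard orientation away from
the root `r`: the endpoint farther from `r`. -/
noncomputable def stdHead {n : ℕ} (T : NTree n) (r : Fin n) (j : Fin (n - 1)) : Fin n :=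
  if (treeRel T.edge).dist r (T.edge j).1 < (treeRel T.edge).dist r (T.edge j).2
    then (T.edge j).2 else (T.edge j).1

/-- The permutation `π` of the vertices: first the root, then the standard heads of the
edges `1', 2', …, (n-1)'` in this order. -/
noncomputable def permFun {n : ℕ} (T : NTree n) (r : Fin n) : Fin n → Fin n :=
  fun m => if h : m.1 = 0 then r else stdHead T r ⟨m.1 - 1, by have := m.isLt; omega⟩

/-- The sign of an `n`-tree with respect to a root `r`:
`(-1) ^ (number of reversed edges) * sgn π`. -/
noncomputable def treeSignAt {n : ℕ} (T : NTree n) (r : Fin n) : ℤ :=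
  (-1) ^ (Finset.univ.filter
      (fun j : Fin (n - 1) => stdHead T r j ≠ (T.edge j).2)).card *
    (if h : Function.Bijective (permFun T r) then
      ((Equiv.Perm.sign (Equiv.ofBijective (permFun T r) h) : ℤˣ) : ℤ) else 1)

/-- The sign of an `n`-tree (independent of the root; we use the vertex `1`). -/
noncomputable def treeSign {n : ℕ} (T : NTree n) : ℤ :=
  if h : 0 < n then treeSignAt T ⟨0, h⟩ else 1

/-- `l` is admissible for `(T, k)`: for each edge `j' = (p, q)`,
if `k p + p < k q + q` then `k p + p ≤ l j + j < k q + q`, and otherwise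
`k q + q ≤ l j + j < k p + p` (all indices are 1-based in the paper, so a vertex
`p : Fin n` carries the label `k p + (p + 1)` and an edge `j : Fin (n-1)` the label
`l j + (j + 1)`). -/
def Admissible {n : ℕ} (T : NTree n) (k : Fin n → ℤ) (l : Fin (n - 1) → ℤ) : Prop :=
  ∀ j : Fin (n - 1),
    if k (T.edge j).1 + ((T.edge j).1.1 : ℤ) + 1 < k (T.edge j).2 + ((T.edge j).2.1 : ℤ) + 1
    then k (T.edge j).1 + ((T.edge j).1.1 : ℤ) + 1 ≤ l j + (j.1 : ℤ) + 1 ∧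
         l j + (j.1 : ℤ) + 1 < k (T.edge j).2 + ((T.edge j).2.1 : ℤ) + 1
    else k (T.edge j).2 + ((T.edge j).2.1 : ℤ) + 1 ≤ l j + (j.1 : ℤ) + 1 ∧
         l j + (j.1 : ℤ) + 1 < k (T.edge j).1 + ((T.edge j).1.1 : ℤ) + 1

/-- The number of inversions of the pair `(T, k)`: edges `j' = (p, q)` with
`¬ (k p + p < k q + q)`. -/
def invCount {n : ℕ} (T : NTree n) (k : Fin n → ℤ) : ℕ :=
  (Finset.univ.filter (fun j : Fin (n - 1) =>
    ¬ (k (T.edge j).1 + ((T.edge j).1.1 : ℤ) + 1 <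
        k (T.edge j).2 + ((T.edge j).2.1 : ℤ) + 1))).card

/-- A tree sequence of order `n`: `T_1, …, T_n` where `T_i` is an `i`-tree. -/
def TreeSeq (n : ℕ) := ∀ i : Fin n, NTree (i.1 + 1)

/-- A Gelfand-Tsetlin tree sequence associated with `𝒯` and `k`: a sequence of
labelings `L i : Fin (i+1) → ℤ` with top labeling `k` and such that each `L (i-1)`
is admissible for `(T_{i+1}, L i)`. -/
def IsGTTreeSeq {n : ℕ} (𝒯 : TreeSeq n) (k : Fin n → ℤ)
    (L : ∀ i : Fin n, Fin (i.1 + 1) → ℤ) : Prop :=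
  (∀ i : Fin n, i.1 + 1 = n → ∀ j : Fin (i.1 + 1),
      L i j = k ⟨j.1, by have := j.isLt; omega⟩) ∧
  ∀ i : Fin n, ∀ hi : 0 < i.1,
    Admissible (𝒯 i) (L i)
      (fun j => L ⟨i.1 - 1, by have := i.isLt; omega⟩
        ⟨j.1, by have := j.isLt; show j.1 < i.1 - 1 + 1; omega⟩)

/-- The sign of a Gelfand-Tsetlin tree sequence:
`(-1) ^ (number of inversions) * sgn 𝒯`. -/
noncomputable def gtSign {n : ℕ} (𝒯 : TreeSeq n)
    (L : ∀ i : Fin n, Fin (i.1 + 1) → ℤ) : ℤ :=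
  (-1) ^ (∑ i : Fin n, invCount (𝒯 i) (L i)) * ∏ i : Fin n, treeSign (𝒯 i)

/-- `L_n(𝒯, k)`: the signed enumeration of all Gelfand-Tsetlin tree sequences
associated with `𝒯` and `k`. -/
noncomputable def Lsum {n : ℕ} (𝒯 : TreeSeq n) (k : Fin n → ℤ) : ℤ :=
  ∑ᶠ L ∈ {L : ∀ i : Fin n, Fin (i.1 + 1) → ℤ | IsGTTreeSeq 𝒯 k L}, gtSign 𝒯 L

/-- `kup k i t` shifts the `i`-th coordinate of `k` by `t`. -/
def kup {n : ℕ} (k : Fin n → ℤ) (i : Fin n) (t : ℤ) : Fin n → ℤ :=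
  fun j => if j = i then k j + t else k j

/-- The forward difference operator `Δ_i = E_i - id` on functions `ℤ^n → ℚ`. -/
def DeltaOp (n : ℕ) (i : Fin n) : ((Fin n → ℤ) → ℚ) → ((Fin n → ℤ) → ℚ) :=
  fun A k => A (kup k i 1) - A k

/-- The backward difference operator `δ_i = id - E_i⁻¹` on functions `ℤ^n → ℚ`. -/
def deltaOp (n : ℕ) (i : Fin n) : ((Fin n → ℤ) → ℚ) → ((Fin n → ℤ) → ℚ) :=
  fun A k => A k - A (kup k i (-1))

/-- The product (composition) of the commuting operators `F i`, `i ∈ S`. -/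
noncomputable def opProd (n : ℕ) (F : Fin n → ((Fin n → ℤ) → ℚ) → ((Fin n → ℤ) → ℚ))
    (S : Finset (Fin n)) : ((Fin n → ℤ) → ℚ) → ((Fin n → ℤ) → ℚ) :=
  S.toList.foldr (fun i f => F i ∘ f) id

/-- The `ρ`-th elementary symmetric polynomial `e_ρ(F 1, …, F n)` of the commuting
operators `F i`, applied to a function `ℤ^n → ℚ`. -/
noncomputable def esymmOp (n ρ : ℕ) (F : Fin n → ((Fin n → ℤ) → ℚ) → ((Fin n → ℤ) → ℚ)) :
    ((Fin n → ℤ) → ℚ) → ((Fin n → ℤ) → ℚ) :=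
  fun A k => ∑ S ∈ Finset.powersetCard ρ (Finset.univ : Finset (Fin n)), opProd n F S A k

/-!
Write `x v = k v + v` for the shifted labels. An admissible row is summed edge by edge, and along
each edge the sum of the binomial rows `(binom(y, 0), binom(y, 1), …)` telescopes; an inversion
only reverses the two endpoints, which its sign `-1` undoes. The differences across the edges are
the incidence matrix of the tree times the binomial matrix one size larger. Removing the rows one
at a time, `L_n(𝒯, k)` is therefore `det (binom(x v, i))` up to a factor independent of `k`.

Every `Δ_v` acts on row `v` of this matrix `B` as right multiplication by one and the same shift
matrix `N`. Hence `e_ρ(Δ_1, …, Δ_n)` applied to `det B` is the coefficient of `X ^ ρ` in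
`det (B + X B N) = det B * det (1 + X N)`, and `det (1 + X N) = 1` because `N` is strictly upper
triangular.
-/

open Finset Matrix

section Multilinear

variable {R ι N : Type*} {E : ι → Type*} [Fintype ι] [DecidableEq ι]

lemma multilinearMap_smul_add [CommSemiring R] [∀ i, AddCommMonoid (E i)] [∀ i, Module R (E i)]
    [AddCommMonoid N] [Module R N] (g : MultilinearMap R E N) (t : R) (a b : ∀ i, E i) :
    g (t • a + b) = ∑ S : Finset ι, t ^ #S • g (S.piecewise a b) := by
  rw [g.map_add_univ]
  refine sum_congr rfl fun S _ ↦ ?_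
  have hsmul : S.piecewise (t • a) b =
      S.piecewise (fun i ↦ t • S.piecewise a b i) (S.piecewise a b) := by
    ext i
    by_cases hi : i ∈ S <;> simp [hi]
  rw [hsmul, g.map_piecewise_smul, prod_const]

lemma prod_smul_sum_piFinset [CommSemiring R] [∀ i, AddCommMonoid (E i)] [∀ i, Module R (E i)]
    [AddCommMonoid N] [Module R N] (g : MultilinearMap R E N) (c : ι → R) {α : Type*}
    (A : ι → Finset α) (u : ∀ i, α → E i) :
    (∏ i, c i) • ∑ r ∈ Fintype.piFinset A, g (fun i ↦ u i (r i)) =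
      g (fun i ↦ c i • ∑ y ∈ A i, u i y) := by
  rw [g.map_smul_univ, g.map_sum_finset]

end Multilinear

section Determinant

open Polynomial

variable {R : Type*} [CommRing R] {m : Type*} [Fintype m] [DecidableEq m]

lemma sum_det_piecewise_mul (A N : Matrix m m R) (ρ : ℕ) :
    ∑ S ∈ powersetCard ρ univ, det (of (S.piecewise (A * N).row A.row)) =
      det A * (det (1 + (X : R[X]) • N.map C)).coeff ρ := by
  have hgen : C (det A) * det (1 + (X : R[X]) • N.map C) =
      ∑ S : Finset m, X ^ #S * C (det (of (S.piecewise (A * N).row A.row))) :=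
    calc C (det A) * det (1 + (X : R[X]) • N.map C)
        = det ((X : R[X]) • (A * N).map C + A.map C) := by
          rw [RingHom.map_det, ← det_mul]
          simp [mul_add, Matrix.map_mul, add_comm]
      _ = ∑ S : Finset m, X ^ #S * det (of (S.piecewise ((A * N).map C).row (A.map C).row)) :=
          multilinearMap_smul_add detRowAlternating.toMultilinearMap X ((A * N).map C) (A.map C)
      _ = ∑ S : Finset m, X ^ #S * C (det (of (S.piecewise (A * N).row A.row))) := by
          refine sum_congr rfl fun S _ ↦ ?_
          rw [RingHom.map_det]
          congr 2
          ext1 i j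
          by_cases hi : i ∈ S <;> simp [hi, -Matrix.map_mul]
  rw [← coeff_C_mul, hgen, finsetSum_coeff, powersetCard_eq_filter, powerset_univ, sum_filter]
  simp [coeff_X_pow, eq_comm]

lemma det_one_add_X_smul_of_strictUpper [LinearOrder m] {N : Matrix m m R}
    (hN : ∀ i j, j ≤ i → N i j = 0) : det (1 + (X : R[X]) • N.map C) = 1 := by
  rw [det_of_isUpperTriangular]
  · simp [hN]
  · intro i j (hij : j < i)
    simp [hN i j hij.le, Matrix.one_apply_ne hij.ne']

lemma det_eq_det_submatrix_succ {n : ℕ} {A : Matrix (Fin (n + 1)) (Fin (n + 1)) R}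
    (h0 : A 0 0 = 1) (hsucc : ∀ i : Fin n, A i.succ 0 = 0) :
    det A = det (A.submatrix Fin.succ Fin.succ) := by
  rw [det_succ_column_zero, Fin.sum_univ_succ]
  simp [h0, hsucc]

/-- The incidence matrix of a directed graph on `Fin (n + 1)` with `n` edges `e j`, read from
`(e j).1` to `(e j).2`; its rows are indexed by the edges, after a row `0` marking the root `0`. -/
def rootedIncidence (R : Type*) [CommRing R] {n : ℕ} (e : Fin n → Fin (n + 1) × Fin (n + 1)) :
    Matrix (Fin (n + 1)) (Fin (n + 1)) R :=
  of (Fin.cons (Pi.single 0 1) fun j ↦ Pi.single (e j).2 1 - Pi.single (e j).1 1)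

lemma det_tail_sub_tail {n : ℕ} (e : Fin n → Fin (n + 1) × Fin (n + 1))
    {B : Matrix (Fin (n + 1)) (Fin (n + 1)) R} (hB : ∀ v, B v 0 = 1) :
    det (of fun j ↦ Fin.tail (B (e j).2) - Fin.tail (B (e j).1)) =
      det (rootedIncidence R e) * det B := by
  have hzero : (rootedIncidence R e * B) 0 = B 0 := by
    ext i
    simp [rootedIncidence, mul_apply, Pi.single_apply]
  have hsucc (j : Fin n) : (rootedIncidence R e * B) j.succ = B (e j).2 - B (e j).1 := by
    ext i
    simp [rootedIncidence, mul_apply, Pi.single_apply, sub_mul]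
  rw [← det_mul, det_eq_det_submatrix_succ]
  · congr 1
    ext1 j i
    simp [hsucc, Fin.tail]
  · simp [hzero, hB]
  · simp [hsucc, hB]

end Determinant

section DifferenceOperators

variable {n : ℕ}

lemma kup_eq_update (k : Fin n → ℤ) (i : Fin n) (t : ℤ) :
    kup k i t = Function.update k i (k i + t) := by
  ext j
  by_cases hj : j = i <;> simp [kup, hj]

lemma DeltaOp_multilinearMap {R : Type*} [Ring R] [Module R ℚ] {E : Fin n → Type*}
    [∀ v, AddCommGroup (E v)] [∀ v, Module R (E v)] (g : MultilinearMap R E ℚ)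
    (f : ∀ v, ℤ → E v) (a : Fin n) :
    DeltaOp n a (fun k ↦ g fun v ↦ f v (k v)) =
      fun k ↦ g fun v ↦ Function.update f a (fwdDiff 1 (f a)) v (k v) := by
  ext k
  have hΔ : (fun v ↦ Function.update f a (fwdDiff 1 (f a)) v (k v)) =
      Function.update (fun v ↦ f v (k v)) a (f a (k a + 1) - f a (k a)) :=
    funext <| Function.apply_update (fun v F ↦ F (k v)) f a _
  have hE : (fun v ↦ f v (kup k a 1 v)) =
      Function.update (fun v ↦ f v (k v)) a (f a (k a + 1)) := by
    rw [kup_eq_update]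
    exact funext <| Function.apply_update f k a _
  rw [hΔ, g.map_update_sub, Function.update_eq_self, ← hE]
  rfl

lemma opProd_DeltaOp_multilinearMap {R : Type*} [Ring R] [Module R ℚ] {E : Fin n → Type*}
    [∀ v, AddCommGroup (E v)] [∀ v, Module R (E v)] (g : MultilinearMap R E ℚ)
    (f : ∀ v, ℤ → E v) (S : Finset (Fin n)) :
    opProd n (DeltaOp n) S (fun k ↦ g fun v ↦ f v (k v)) =
      fun k ↦ g fun v ↦ S.piecewise (fun v ↦ fwdDiff 1 (f v)) f v (k v) := by
  have hlist (l : List (Fin n)) (hl : l.Nodup) :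
      l.foldr (fun i F ↦ DeltaOp n i ∘ F) id (fun k ↦ g fun v ↦ f v (k v)) =
        fun k ↦ g fun v ↦ l.toFinset.piecewise (fun v ↦ fwdDiff 1 (f v)) f v (k v) := by
    induction l with
    | nil => rw [List.toFinset_nil, piecewise_empty]; rfl
    | cons a l ih =>
      obtain ⟨ha, hl⟩ := List.nodup_cons.1 hl
      rw [List.foldr_cons, Function.comp_apply, ih hl, DeltaOp_multilinearMap,
        List.toFinset_cons, piecewise_insert,
        piecewise_eq_of_notMem _ _ _ (by simpa using ha)]
  rw [opProd, hlist _ S.nodup_toList, toList_toFinset]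

lemma esymmOp_DeltaOp_map_det {R : Type*} [CommRing R] (φ : R →+ ℚ) {f : Fin n → ℤ → Fin n → R}
    {N : Matrix (Fin n) (Fin n) R} (hN : ∀ i j, j ≤ i → N i j = 0)
    (hf : ∀ v x, fwdDiff 1 (f v) x = f v x ᵥ* N) {ρ : ℕ} (hρ : ρ ≠ 0) :
    esymmOp n ρ (DeltaOp n) (fun k ↦ φ (det (of fun v ↦ f v (k v)))) = 0 := by
  let g : MultilinearMap ℤ (fun _ : Fin n ↦ Fin n → R) ℚ :=
    φ.toIntLinearMap.compMultilinearMap (detRowAlternating.toMultilinearMap.restrictScalars ℤ)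
  ext k
  let A : Matrix (Fin n) (Fin n) R := of fun v ↦ f v (k v)
  have hopProd (S : Finset (Fin n)) :
      opProd n (DeltaOp n) S (fun k ↦ φ (det (of fun v ↦ f v (k v)))) k =
        φ (det (of (S.piecewise (A * N).row A.row))) := by
    have hrows : (fun v ↦ S.piecewise (fun v ↦ fwdDiff 1 (f v)) f v (k v)) =
        S.piecewise (A * N).row A.row := by
      ext v : 1
      by_cases hv : v ∈ S
      · rw [piecewise_eq_of_mem _ _ _ hv, piecewise_eq_of_mem _ _ _ hv, hf]
        rfl
      · rw [piecewise_eq_of_notMem _ _ _ hv, piecewise_eq_of_notMem _ _ _ hv]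
        rfl
    exact (congr_fun (opProd_DeltaOp_multilinearMap g f S) k).trans (congr_arg g hrows)
  simp only [esymmOp, hopProd, Pi.zero_apply]
  rw [← map_sum, sum_det_piecewise_mul, det_one_add_X_smul_of_strictUpper hN,
    Polynomial.coeff_one, if_neg hρ, mul_zero, map_zero]

end DifferenceOperators

section BinomialDeterminant

/-- The row of binomial coefficients `x` over `0, …, n - 1`. -/
def chooseRow (n : ℕ) (x : ℤ) : Fin n → ℤ := fun i ↦ Ring.choose x i

/-- The matrix of the nilpotent shift of row vectors, which has its ones directly above the
diagonal. -/
def superdiagonal (n : ℕ) : Matrix (Fin n) (Fin n) ℤ :=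
  of fun i j ↦ if (i : ℕ) + 1 = j then 1 else 0

lemma superdiagonal_apply_of_le {n : ℕ} {i j : Fin n} (h : j ≤ i) : superdiagonal n i j = 0 :=
  if_neg (by grind)

lemma fwdDiff_choose_succ (i : ℕ) :
    fwdDiff 1 (fun x : ℤ ↦ Ring.choose x (i + 1)) = fun x ↦ Ring.choose x i := by
  ext x
  rw [fwdDiff, Ring.choose_succ_succ, add_sub_cancel_right]

lemma fwdDiff_chooseRow (n : ℕ) (x : ℤ) :
    fwdDiff 1 (chooseRow n) x = chooseRow n x ᵥ* superdiagonal n := by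
  ext ⟨i, hi⟩
  cases i with
  | zero => simp [fwdDiff, chooseRow, superdiagonal, vecMul, dotProduct]
  | succ i =>
    have hcol (l : Fin n) : superdiagonal n l ⟨i + 1, hi⟩ = if l = ⟨i, by lia⟩ then 1 else 0 := by
      simp [superdiagonal, Fin.ext_iff]
    simp only [vecMul, dotProduct, hcol, mul_ite, mul_one, mul_zero, sum_ite_eq', mem_univ, if_true]
    exact congr_fun (fwdDiff_choose_succ i) x

lemma fwdDiff_tail_chooseRow (n : ℕ) :
    fwdDiff 1 (fun x ↦ Fin.tail (chooseRow (n + 1) x)) = chooseRow n := by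
  ext x i
  exact congr_fun (fwdDiff_choose_succ i) x

/-- The label `k v + v` of the vertex `v` in the paper's numbering of the vertices from `1`. -/
def shiftedLabel {n : ℕ} (k : Fin n → ℤ) (v : Fin n) : ℤ := k v + v + 1

/-- The matrix of binomial coefficients whose determinant is proportional to `L_n(𝒯, k)`. -/
def chooseMatrix {n : ℕ} (k : Fin n → ℤ) : Matrix (Fin n) (Fin n) ℤ :=
  of fun v ↦ chooseRow n (shiftedLabel k v)

end BinomialDeterminant

section Admissible

variable {n : ℕ} (T : NTree (n + 1)) (k : Fin (n + 1) → ℤ)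

/-- The sign `-1` of an inversion and `1` of any other edge. -/
def edgeSign (j : Fin n) : ℤ :=
  if shiftedLabel k (T.edge j).1 < shiftedLabel k (T.edge j).2 then 1 else -1

/-- The values that an admissible vector may take at the edge `j`. -/
noncomputable def admissibleIco (j : Fin n) : Finset ℤ :=
  Ico (min (shiftedLabel k (T.edge j).1) (shiftedLabel k (T.edge j).2) - (j + 1))
    (max (shiftedLabel k (T.edge j).1) (shiftedLabel k (T.edge j).2) - (j + 1))

/-- The admissible vectors for `(T, k)`. -/
noncomputable def admissibleFinset : Finset (Fin n → ℤ) := Fintype.piFinset (admissibleIco T k)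

variable {T k} in
lemma mem_admissibleFinset {l : Fin n → ℤ} : l ∈ admissibleFinset T k ↔ Admissible T k l := by
  simp only [admissibleFinset, Fintype.mem_piFinset, admissibleIco, mem_Ico]
  refine forall_congr' fun j ↦ ?_
  rw [sub_le_iff_le_add, lt_sub_iff_add_lt, ← add_assoc]
  split_ifs with h
  · have hle : shiftedLabel k (T.edge j).1 ≤ shiftedLabel k (T.edge j).2 := le_of_lt h
    rw [min_eq_left hle, max_eq_right hle]
    rfl
  · have hle : shiftedLabel k (T.edge j).2 ≤ shiftedLabel k (T.edge j).1 := le_of_not_gt h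
    rw [min_eq_right hle, max_eq_left hle]
    rfl

lemma neg_one_pow_invCount : (-1 : ℤ) ^ invCount T k = ∏ j, edgeSign T k j := by
  unfold edgeSign
  rw [prod_ite, prod_const_one, one_mul, prod_const]
  congr!

lemma sum_Ico_int_fwdDiff {G : Type*} [AddCommGroup G] (F : ℤ → G) {a b : ℤ} (hab : a ≤ b) :
    ∑ y ∈ Ico a b, fwdDiff 1 F y = F b - F a := by
  induction b, hab using Int.leInduction with
  | base => simp
  | succ b hab ih =>
    rw [← Order.succ_eq_add_one, ← insert_Ico_right_eq_Ico_succ hab, sum_insert right_notMem_Ico,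
      ih, fwdDiff, sub_add_sub_cancel, Order.succ_eq_add_one]

lemma edgeSign_smul_sum_fwdDiff {G : Type*} [AddCommGroup G] (F : ℤ → G) (j : Fin n) :
    edgeSign T k j • ∑ y ∈ admissibleIco T k j, fwdDiff 1 F (y + j + 1) =
      F (shiftedLabel k (T.edge j).2) - F (shiftedLabel k (T.edge j).1) := by
  have htelescope {a b : ℤ} (hab : a ≤ b) :
      ∑ y ∈ Ico (a - (j + 1)) (b - (j + 1)), fwdDiff 1 F (y + j + 1) = F b - F a := by
    simp only [add_assoc]
    simpa only [fwdDiff_comp_add, sub_add_cancel] using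
      sum_Ico_int_fwdDiff (fun y ↦ F (y + (j + 1))) (sub_le_sub_right hab (j + 1 : ℤ))
  unfold edgeSign admissibleIco
  split_ifs with h
  · rw [min_eq_left h.le, max_eq_right h.le, htelescope h.le, one_smul]
  · rw [not_lt] at h
    rw [min_eq_right h, max_eq_left h, htelescope h, neg_one_smul, neg_sub]

lemma neg_one_pow_invCount_mul_sum_det :
    (-1) ^ invCount T k * ∑ l ∈ admissibleFinset T k, det (chooseMatrix l) =
      det (rootedIncidence ℤ T.edge) * det (chooseMatrix k) := by
  let F (x : ℤ) : Fin n → ℤ := Fin.tail (chooseRow (n + 1) x)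
  calc (-1) ^ invCount T k * ∑ l ∈ admissibleFinset T k, det (chooseMatrix l)
      = det (of fun j ↦
          edgeSign T k j • ∑ y ∈ admissibleIco T k j, chooseRow n (y + j + 1)) := by
        rw [neg_one_pow_invCount]
        exact prod_smul_sum_piFinset detRowAlternating.toMultilinearMap (edgeSign T k)
          (admissibleIco T k) fun j y ↦ chooseRow n (y + j + 1)
    _ = det (of fun j : Fin n ↦
          F (shiftedLabel k (T.edge j).2) - F (shiftedLabel k (T.edge j).1)) := by
        congr! 3 with j
        rw [← edgeSign_smul_sum_fwdDiff, fwdDiff_tail_chooseRow]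
    _ = det (rootedIncidence ℤ T.edge) * det (chooseMatrix k) :=
        det_tail_sub_tail (n := n) T.edge (B := chooseMatrix k) fun v ↦ Ring.choose_zero_right _

end Admissible

section GelfandTsetlin

variable {n : ℕ}

/-- A triangular array: the rows of a Gelfand-Tsetlin tree sequence, row `i` having `i + 1`
entries. -/
abbrev TriangularArray (n : ℕ) := ∀ i : Fin n, Fin (i.1 + 1) → ℤ

/-- The row with `m` entries of a triangular array; unlike the rows of the array itself, it is
also defined, as the empty vector, for `m = 0`. -/
def rowOfLength (L : TriangularArray n) (m : ℕ) (hm : m ≤ n) : Fin m → ℤ :=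
  fun j ↦ L ⟨m - 1, by have := j.isLt; lia⟩ ⟨j, by have := j.isLt; simp only; lia⟩

/-- The triangular array `L` with the row `k` appended. -/
def appendRow (L : TriangularArray n) (k : Fin (n + 1) → ℤ) : TriangularArray (n + 1) :=
  Fin.snoc (α := fun i : Fin (n + 1) ↦ Fin (i.1 + 1) → ℤ) L k

/-- The tree sequence without its largest tree. -/
def TreeSeq.init (𝒯 : TreeSeq (n + 1)) : TreeSeq n := fun i ↦ 𝒯 i.castSucc

/-- The largest tree of a tree sequence. -/
def TreeSeq.last (𝒯 : TreeSeq (n + 1)) : NTree (n + 1) := 𝒯 (Fin.last n)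

lemma appendRow_castSucc (L : TriangularArray n) (k : Fin (n + 1) → ℤ) (i : Fin n) :
    appendRow L k i.castSucc = L i :=
  Fin.snoc_castSucc (α := fun i : Fin (n + 1) ↦ Fin (i.1 + 1) → ℤ) ..

lemma appendRow_last (L : TriangularArray n) (k : Fin (n + 1) → ℤ) :
    appendRow L k (Fin.last n) = k :=
  Fin.snoc_last (α := fun i : Fin (n + 1) ↦ Fin (i.1 + 1) → ℤ) ..

lemma rowOfLength_appendRow (L : TriangularArray n) (k : Fin (n + 1) → ℤ) (m : ℕ) (hm : m ≤ n) :
    rowOfLength (appendRow L k) m (hm.trans n.le_succ) = rowOfLength L m hm := by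
  ext j
  have hlt : m - 1 < n := by have := j.isLt; lia
  exact congr_fun (appendRow_castSucc L k ⟨m - 1, hlt⟩) _

lemma rowOfLength_appendRow_self (L : TriangularArray n) (k : Fin (n + 1) → ℤ) :
    rowOfLength (appendRow L k) (n + 1) le_rfl = k :=
  appendRow_last L k

lemma appendRow_init (L : TriangularArray (n + 1)) :
    appendRow (fun i ↦ L i.castSucc) (L (Fin.last n)) = L :=
  Fin.snoc_init_self (α := fun i : Fin (n + 1) ↦ Fin (i.1 + 1) → ℤ) L

lemma appendRow_left_injective (k : Fin (n + 1) → ℤ) :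
    Function.Injective fun L : TriangularArray n ↦ appendRow L k :=
  Fin.snoc_left_injective (α := fun i : Fin (n + 1) ↦ Fin (i.1 + 1) → ℤ) k

lemma isGTTreeSeq_iff {𝒯 : TreeSeq n} {k : Fin n → ℤ} {L : TriangularArray n} :
    IsGTTreeSeq 𝒯 k L ↔ rowOfLength L n le_rfl = k ∧
      ∀ i : Fin n, Admissible (𝒯 i) (L i) (rowOfLength L i i.isLt.le) := by
  constructor
  · rintro ⟨htop, hadm⟩
    refine ⟨funext fun j ↦ htop _ (by have := j.isLt; simp only; lia) _, fun i ↦ ?_⟩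
    obtain hi | hi := i.1.eq_zero_or_pos
    · exact fun j ↦ absurd j.isLt (by lia)
    · exact hadm i hi
  · rintro ⟨rfl, hadm⟩
    refine ⟨?_, fun i _ ↦ hadm i⟩
    rintro ⟨i, hin⟩ hi j
    obtain rfl : n = i + 1 := hi.symm
    rfl

lemma isGTTreeSeq_appendRow_iff {𝒯 : TreeSeq (n + 1)} {k k' : Fin (n + 1) → ℤ}
    {L : TriangularArray n} :
    IsGTTreeSeq 𝒯 k (appendRow L k') ↔ k' = k ∧ Admissible 𝒯.last k (rowOfLength L n le_rfl) ∧
      IsGTTreeSeq 𝒯.init (rowOfLength L n le_rfl) L := by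
  rw [isGTTreeSeq_iff, isGTTreeSeq_iff, Fin.forall_fin_succ', rowOfLength_appendRow_self,
    and_comm (a := ∀ _, _)]
  simp only [appendRow_castSucc, appendRow_last, true_and, Fin.val_castSucc, Fin.val_last,
    rowOfLength_appendRow, le_refl, Fin.is_le']
  exact and_congr_right fun hk ↦ by rw [hk]; rfl

lemma setOf_isGTTreeSeq_succ (𝒯 : TreeSeq (n + 1)) (k : Fin (n + 1) → ℤ) :
    {L | IsGTTreeSeq 𝒯 k L} = ⋃ l ∈ (admissibleFinset 𝒯.last k : Set (Fin n → ℤ)),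
      (appendRow · k) '' {L | IsGTTreeSeq 𝒯.init l L} := by
  ext L
  simp only [Set.mem_iUnion₂, Set.mem_image, Set.mem_ofPred_eq, mem_coe, mem_admissibleFinset,
    exists_prop]
  constructor
  · intro hL
    rw [← appendRow_init L, isGTTreeSeq_appendRow_iff] at hL
    obtain ⟨hlast, hadm, hinit⟩ := hL
    exact ⟨_, hadm, _, hinit, by rw [← hlast, appendRow_init]⟩
  · rintro ⟨l, hadm, L', hL', rfl⟩
    obtain rfl := (isGTTreeSeq_iff.1 hL').1
    exact isGTTreeSeq_appendRow_iff.2 ⟨rfl, hadm, hL'⟩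

lemma finite_setOf_isGTTreeSeq (𝒯 : TreeSeq n) (k : Fin n → ℤ) :
    {L | IsGTTreeSeq 𝒯 k L}.Finite := by
  induction n with
  | zero => exact Set.toFinite _
  | succ n ih =>
    rw [setOf_isGTTreeSeq_succ]
    exact (finite_toSet _).biUnion fun l _ ↦ (ih 𝒯.init l).image _

lemma gtSign_appendRow (𝒯 : TreeSeq (n + 1)) (L : TriangularArray n) (k : Fin (n + 1) → ℤ) :
    gtSign 𝒯 (appendRow L k) =
      (-1) ^ invCount 𝒯.last k * treeSign 𝒯.last * gtSign 𝒯.init L := by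
  simp only [gtSign, Fin.sum_univ_castSucc, Fin.prod_univ_castSucc, appendRow_last,
    appendRow_castSucc, pow_add, TreeSeq.init, TreeSeq.last]
  ring

lemma Lsum_zero (𝒯 : TreeSeq 0) (k : Fin 0 → ℤ) : Lsum 𝒯 k = 1 := by
  have huniv : {L | IsGTTreeSeq 𝒯 k L} = {finZeroElim} :=
    Set.eq_singleton_iff_unique_mem.2 ⟨⟨finZeroElim, finZeroElim⟩, fun _ _ ↦ Subsingleton.elim _ _⟩
  rw [Lsum, huniv, finsum_mem_singleton]
  simp [gtSign]

lemma Lsum_succ (𝒯 : TreeSeq (n + 1)) (k : Fin (n + 1) → ℤ) :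
    Lsum 𝒯 k = treeSign 𝒯.last * ((-1) ^ invCount 𝒯.last k *
      ∑ l ∈ admissibleFinset 𝒯.last k, Lsum 𝒯.init l) := by
  have hdisjoint : (admissibleFinset 𝒯.last k : Set (Fin n → ℤ)).PairwiseDisjoint
      fun l ↦ (appendRow · k) '' {L | IsGTTreeSeq 𝒯.init l L} := by
    intro l _ l' _ hne
    refine (Set.disjoint_image_iff (appendRow_left_injective k)).2 (Set.disjoint_left.2 ?_)
    exact fun L hL hL' ↦ hne ((isGTTreeSeq_iff.1 hL).1.symm.trans (isGTTreeSeq_iff.1 hL').1)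
  have hfiber (l : Fin n → ℤ) :
      ∑ᶠ L ∈ (appendRow · k) '' {L | IsGTTreeSeq 𝒯.init l L}, gtSign 𝒯 L =
        (-1) ^ invCount 𝒯.last k * treeSign 𝒯.last * Lsum 𝒯.init l := by
    rw [finsum_mem_image (appendRow_left_injective k).injOn, Lsum, mul_finsum_mem]
    simp only [gtSign_appendRow]
  rw [Lsum, setOf_isGTTreeSeq_succ, finsum_mem_biUnion hdisjoint (finite_toSet _)
    fun l _ ↦ (finite_setOf_isGTTreeSeq _ l).image _]
  simp only [hfiber, finsum_mem_coe_finset]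
  rw [← mul_sum, mul_left_comm, mul_assoc]

theorem Lsum_eq_mul_det_chooseMatrix (𝒯 : TreeSeq n) (k : Fin n → ℤ) :
    Lsum 𝒯 k =
      (∏ i, treeSign (𝒯 i) * det (rootedIncidence ℤ (n := i) (𝒯 i).edge)) *
        det (chooseMatrix k) := by
  induction n with
  | zero => simp [Lsum_zero]
  | succ n ih =>
    simp only [Lsum_succ, ih]
    rw [← mul_sum, mul_left_comm _ (∏ i, _), neg_one_pow_invCount_mul_sum_det,
      Fin.prod_univ_castSucc]
    simp only [TreeSeq.init, TreeSeq.last, Fin.val_castSucc, Fin.val_last]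
    ring

end GelfandTsetlin

/-- For `ρ ≥ 1`, the operator `e_ρ(Δ_1, …, Δ_n)` annihilates `k ↦ L_n(𝒯, k)`. -/
theorem gt_tree_sequence_esymm_delta (n : ℕ) (hn : 1 ≤ n)
    (𝒯 : TreeSeq n) (ρ : ℕ) (hρ : 1 ≤ ρ) :
    esymmOp n ρ (DeltaOp n) (fun k => (Lsum 𝒯 k : ℚ)) = 0 := by
  have hshift (v : Fin n) (x : ℤ) : fwdDiff 1 (fun x ↦ chooseRow n (x + v + 1)) x =
      chooseRow n (x + v + 1) ᵥ* superdiagonal n := by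
    simp only [add_assoc, fwdDiff_comp_add, fwdDiff_chooseRow]
  simp only [Lsum_eq_mul_det_chooseMatrix]
  exact esymmOp_DeltaOp_map_det ((Int.castAddHom ℚ).comp (AddMonoidHom.mulLeft _))
    (fun _ _ ↦ superdiagonal_apply_of_le) hshift (Nat.one_le_iff_ne_zero.1 hρ)
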